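/- With the true nuisance functions, the one-step integrand for the relative error is unbiased: for any bounded measurable τ̂₁, τ̂₂ : 𝒳 → ℝ, E[τ̂₁(X)² − τ̂₂(X)² − 2(τ̂₁(X) − τ̂₂(X))·Γ] = δ(τ̂₁, τ̂₂), where δ(τ̂₁, τ̂₂) := φ(τ̂₁) − φ(τ̂₂). -/

import Mathlib

open MeasureTheory ProbabilityTheory

/-!
The correction term of each treatment arm is conditionally centred: given `X`, the mean of
`W (Y - μ₁(X))` is `e(X) μ₁(X) - e(X) μ₁(X) = 0`, dividing by the function `e(X)` of `X` preserves
this, and the control arm is the same statement for `1 - W`. Hence `E[Γ ∣ X] = τ(X)`. Since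
`τ̂₁(X) - τ̂₂(X)` is a function of `X`, replacing `Γ` by `τ(X)` does not change the expectation of
the one-step integrand, which then becomes the difference of squares `(τ̂₁ - τ)² - (τ̂₂ - τ)²`.
By overlap, `μ₁(X) = E[W Y ∣ X] / e(X)` inherits its integrability from `Y`.
-/

open scoped ENNReal

section OneStep

variable {Ω : Type*} {m mΩ : MeasurableSpace Ω} {P : Measure Ω}
  {A W Y Z Γ e p ν μ₀ μ₁ τ τhat₁ τhat₂ f g : Ω → ℝ} {η : ℝ} {q : ℝ≥0∞}

lemma memLp_div_of_ae_le (hη : 0 < η) (hp : AEStronglyMeasurable p P) (hηp : ∀ᵐ ω ∂P, η ≤ p ω)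
    (hf : MemLp f q P) : MemLp (f / p) q P := by
  refine hf.of_le_mul (c := η⁻¹) (hf.aestronglyMeasurable.div₀ hp) ?_
  filter_upwards [hηp] with ω hω
  rw [Pi.div_apply, norm_div, div_eq_inv_mul]
  gcongr
  exact hω.trans (le_abs_self _)

lemma aestronglyMeasurable_of_condExp_ae_eq (hg : P[Z | m] =ᵐ[P] g) :
    AEStronglyMeasurable[m] g P :=
  stronglyMeasurable_condExp.aestronglyMeasurable.congr hg

lemma condExp_div_ae_eq_of_condExp_ae_eq_mul (hη : 0 < η) (hηp : ∀ᵐ ω ∂P, η ≤ p ω)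
    (hZ : P[Z | m] =ᵐ[P] p * ν) : P[Z | m] / p =ᵐ[P] ν := by
  filter_upwards [hηp, hZ] with ω hω hZω
  rw [Pi.div_apply, hZω, Pi.mul_apply, mul_div_cancel_left₀ _ (hη.trans_le hω).ne']

lemma memLp_of_condExp_ae_eq_mul (hq : 1 ≤ q) (hη : 0 < η) (hp : AEStronglyMeasurable p P)
    (hηp : ∀ᵐ ω ∂P, η ≤ p ω) (hZ : MemLp Z q P) (hpν : P[Z | m] =ᵐ[P] p * ν) : MemLp ν q P :=
  (memLp_div_of_ae_le hη hp hηp (hZ.condExp hq)).ae_eq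
    (condExp_div_ae_eq_of_condExp_ae_eq_mul hη hηp hpν)

lemma condExp_mul_sub_ae_eq_zero (hν : AEStronglyMeasurable[m] ν P) (hA : Integrable A P)
    (hAY : Integrable (A * Y) P) (hAν : Integrable (A * ν) P)
    (hp : P[A | m] =ᵐ[P] p) (hpν : P[A * Y | m] =ᵐ[P] p * ν) :
    P[A * (Y - ν) | m] =ᵐ[P] 0 := by
  rw [mul_sub]
  filter_upwards [condExp_sub hAY hAν m, condExp_mul_of_aestronglyMeasurable_right hν hAν hA,
    hp, hpν] with ω h_sub h_pull hpω hpνω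
  simp only [h_sub, h_pull, hpω, hpνω, Pi.sub_apply, Pi.mul_apply, Pi.zero_apply, sub_self]

lemma condExp_div_ae_eq_zero (hp : AEStronglyMeasurable[m] p P) (hZ : Integrable Z P)
    (hZp : Integrable (Z / p) P) (hZ0 : P[Z | m] =ᵐ[P] 0) : P[Z / p | m] =ᵐ[P] 0 := by
  rw [div_eq_mul_inv] at hZp ⊢
  filter_upwards [condExp_mul_of_aestronglyMeasurable_right hp.inv₀ hZp hZ, hZ0] with ω h_pull h0
  simp only [h_pull, h0, Pi.mul_apply, Pi.zero_apply, zero_mul]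

lemma integral_mul_eq_of_condExp_ae_eq (hm : m ≤ mΩ) [SigmaFinite (P.trim hm)]
    (hf : AEStronglyMeasurable[m] f P) (hfZ : Integrable (f * Z) P) (hZ : Integrable Z P)
    (hg : P[Z | m] =ᵐ[P] g) :
    ∫ ω, f ω * Z ω ∂P = ∫ ω, f ω * g ω ∂P := by
  calc ∫ ω, f ω * Z ω ∂P = ∫ ω, (P[f * Z | m]) ω ∂P := (integral_condExp hm).symm
    _ = ∫ ω, f ω * g ω ∂P := by
      apply integral_congr_ae
      filter_upwards [condExp_mul_of_aestronglyMeasurable_left hf hfZ hZ, hg] with ω h_pull hgω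
      rw [h_pull, Pi.mul_apply, hgω]

/-- The augmented inverse-probability-weighted score of a single treatment arm, with arm weight `A`
(the indicator of receiving the treatment), propensity `p` and outcome regression `ν`. The AIPW
pseudo-outcome is the difference of the scores of the two arms. -/
noncomputable def aipwScore (A Y p ν : Ω → ℝ) : Ω → ℝ :=
  A * (Y - ν) / p + ν

/-- The AIPW pseudo-outcome `Γ`, with the covariates already composed into the propensity `e` and
the outcome regressions `μ₀`, `μ₁`, so that these are functions on `Ω`. -/
noncomputable def aipwPseudoOutcome (W Y e μ₀ μ₁ : Ω → ℝ) (ω : Ω) : ℝ :=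
  W ω * (Y ω - μ₁ ω) / e ω + μ₁ ω - (1 - W ω) * (Y ω - μ₀ ω) / (1 - e ω) - μ₀ ω

lemma aipwPseudoOutcome_eq_aipwScore_sub (W Y e μ₀ μ₁ : Ω → ℝ) :
    aipwPseudoOutcome W Y e μ₀ μ₁ = aipwScore W Y e μ₁ - aipwScore (1 - W) Y (1 - e) μ₀ :=
  funext fun _ ↦ sub_sub _ _ _

lemma memLp_aipwScore (hm : m ≤ mΩ) (hq : 1 ≤ q) (hA : MemLp A ∞ P) (hY : MemLp Y q P)
    (hη : 0 < η) (hηp : ∀ᵐ ω ∂P, η ≤ p ω)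
    (hp : P[A | m] =ᵐ[P] p) (hpν : P[A * Y | m] =ᵐ[P] p * ν) :
    MemLp (aipwScore A Y p ν) q P := by
  have hp_meas : AEStronglyMeasurable p P := (aestronglyMeasurable_of_condExp_ae_eq hp).mono hm
  have hν : MemLp ν q P := memLp_of_condExp_ae_eq_mul hq hη hp_meas hηp (hY.mul hA) hpν
  exact (memLp_div_of_ae_le hη hp_meas hηp ((hY.sub hν).mul hA)).add hν

variable [IsFiniteMeasure P]

lemma condExp_aipwScore (hm : m ≤ mΩ) (hA : MemLp A ∞ P) (hY : Integrable Y P)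
    (hη : 0 < η) (hηp : ∀ᵐ ω ∂P, η ≤ p ω)
    (hp : P[A | m] =ᵐ[P] p) (hpν : P[A * Y | m] =ᵐ[P] p * ν) :
    P[aipwScore A Y p ν | m] =ᵐ[P] ν := by
  have hp_meas : AEStronglyMeasurable[m] p P := aestronglyMeasurable_of_condExp_ae_eq hp
  have hν_meas : AEStronglyMeasurable[m] ν P :=
    (stronglyMeasurable_condExp.aestronglyMeasurable.div₀ hp_meas).congr
      (condExp_div_ae_eq_of_condExp_ae_eq_mul hη hηp hpν)
  have hY_mem : MemLp Y 1 P := memLp_one_iff_integrable.2 hY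
  have hν_mem : MemLp ν 1 P :=
    memLp_of_condExp_ae_eq_mul le_rfl hη (hp_meas.mono hm) hηp (hY_mem.mul hA) hpν
  have hres_mem : MemLp (A * (Y - ν)) 1 P := (hY_mem.sub hν_mem).mul hA
  have hcorr : Integrable (A * (Y - ν) / p) P :=
    memLp_one_iff_integrable.1 (memLp_div_of_ae_le hη (hp_meas.mono hm) hηp hres_mem)
  have hres_zero : P[A * (Y - ν) | m] =ᵐ[P] 0 :=
    condExp_mul_sub_ae_eq_zero hν_meas (hA.integrable le_top)
      (memLp_one_iff_integrable.1 (hY_mem.mul hA)) (memLp_one_iff_integrable.1 (hν_mem.mul hA))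
      hp hpν
  have hν : Integrable ν P := memLp_one_iff_integrable.1 hν_mem
  calc P[aipwScore A Y p ν | m]
      =ᵐ[P] P[A * (Y - ν) / p | m] + P[ν | m] := condExp_add hcorr hν m
    _ =ᵐ[P] 0 + ν := (condExp_div_ae_eq_zero hp_meas (memLp_one_iff_integrable.1 hres_mem) hcorr
        hres_zero).add (condExp_of_aestronglyMeasurable' hm hν_meas hν)
    _ = ν := zero_add ν

lemma condExp_one_sub (hm : m ≤ mΩ) (hW : Integrable W P) (he : P[W | m] =ᵐ[P] e) :
    P[1 - W | m] =ᵐ[P] 1 - e := by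
  calc P[1 - W | m]
      =ᵐ[P] P[1 | m] - P[W | m] := condExp_sub (integrable_const 1) hW m
    _ =ᵐ[P] 1 - e := (Filter.EventuallyEq.of_eq (condExp_const hm 1)).sub he

lemma memLp_aipwPseudoOutcome (hm : m ≤ mΩ) (hq : 1 ≤ q) (hW : MemLp W ∞ P) (hY : MemLp Y q P)
    (hη : 0 < η) (hηe : ∀ᵐ ω ∂P, η ≤ e ω) (heη : ∀ᵐ ω ∂P, η ≤ 1 - e ω)
    (he : P[W | m] =ᵐ[P] e) (hμ₁ : P[W * Y | m] =ᵐ[P] e * μ₁)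
    (hμ₀ : P[(1 - W) * Y | m] =ᵐ[P] (1 - e) * μ₀) :
    MemLp (aipwPseudoOutcome W Y e μ₀ μ₁) q P := by
  rw [aipwPseudoOutcome_eq_aipwScore_sub]
  exact (memLp_aipwScore hm hq hW hY hη hηe he hμ₁).sub
    (memLp_aipwScore hm hq ((memLp_const 1).sub hW) hY hη heη
      (condExp_one_sub hm (hW.integrable le_top) he) hμ₀)

lemma condExp_aipwPseudoOutcome (hm : m ≤ mΩ) (hW : MemLp W ∞ P) (hY : Integrable Y P)
    (hη : 0 < η) (hηe : ∀ᵐ ω ∂P, η ≤ e ω) (heη : ∀ᵐ ω ∂P, η ≤ 1 - e ω)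
    (he : P[W | m] =ᵐ[P] e) (hμ₁ : P[W * Y | m] =ᵐ[P] e * μ₁)
    (hμ₀ : P[(1 - W) * Y | m] =ᵐ[P] (1 - e) * μ₀) :
    P[aipwPseudoOutcome W Y e μ₀ μ₁ | m] =ᵐ[P] μ₁ - μ₀ := by
  have hV : MemLp (1 - W) ∞ P := (memLp_const 1).sub hW
  have he' : P[1 - W | m] =ᵐ[P] 1 - e := condExp_one_sub hm (hW.integrable le_top) he
  have hY_mem : MemLp Y 1 P := memLp_one_iff_integrable.2 hY
  have htreated : Integrable (aipwScore W Y e μ₁) P :=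
    memLp_one_iff_integrable.1 (memLp_aipwScore hm le_rfl hW hY_mem hη hηe he hμ₁)
  have hcontrol : Integrable (aipwScore (1 - W) Y (1 - e) μ₀) P :=
    memLp_one_iff_integrable.1 (memLp_aipwScore hm le_rfl hV hY_mem hη heη he' hμ₀)
  rw [aipwPseudoOutcome_eq_aipwScore_sub]
  calc P[aipwScore W Y e μ₁ - aipwScore (1 - W) Y (1 - e) μ₀ | m]
      =ᵐ[P] P[aipwScore W Y e μ₁ | m] - P[aipwScore (1 - W) Y (1 - e) μ₀ | m] :=
        condExp_sub htreated hcontrol m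
    _ =ᵐ[P] μ₁ - μ₀ := (condExp_aipwScore hm hW hY hη hηe he hμ₁).sub
        (condExp_aipwScore hm hV hY hη heη he' hμ₀)

lemma integral_one_step_of_condExp_ae_eq (hm : m ≤ mΩ) (hΓ : MemLp Γ 2 P)
    (hf : MemLp f 2 P) (hg : MemLp g 2 P)
    (hf_meas : AEStronglyMeasurable[m] f P) (hg_meas : AEStronglyMeasurable[m] g P)
    (hτ : P[Γ | m] =ᵐ[P] τ) :
    ∫ ω, (f ω ^ 2 - g ω ^ 2 - 2 * (f ω - g ω) * Γ ω) ∂P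
      = (∫ ω, (f ω - τ ω) ^ 2 ∂P) - ∫ ω, (g ω - τ ω) ^ 2 ∂P := by
  have hτ_mem : MemLp τ 2 P := (hΓ.condExp one_le_two).ae_eq hτ
  have hsq : Integrable (fun ω ↦ f ω ^ 2 - g ω ^ 2) P := hf.integrable_sq.sub hg.integrable_sq
  have hfgΓ : Integrable (fun ω ↦ (f ω - g ω) * Γ ω) P := (hf.sub hg).integrable_mul hΓ
  have hfgτ : Integrable (fun ω ↦ (f ω - g ω) * τ ω) P := (hf.sub hg).integrable_mul hτ_mem
  have hcross : ∫ ω, (f ω - g ω) * Γ ω ∂P = ∫ ω, (f ω - g ω) * τ ω ∂P :=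
    integral_mul_eq_of_condExp_ae_eq hm (hf_meas.sub hg_meas) hfgΓ (hΓ.integrable one_le_two) hτ
  calc ∫ ω, (f ω ^ 2 - g ω ^ 2 - 2 * (f ω - g ω) * Γ ω) ∂P
      = ∫ ω, (f ω ^ 2 - g ω ^ 2) ∂P - 2 * ∫ ω, (f ω - g ω) * Γ ω ∂P := by
        simp only [mul_assoc]
        rw [integral_sub hsq (hfgΓ.const_mul 2), integral_const_mul]
    _ = ∫ ω, (f ω ^ 2 - g ω ^ 2 - 2 * ((f ω - g ω) * τ ω)) ∂P := by
        rw [hcross, integral_sub hsq (hfgτ.const_mul 2), integral_const_mul]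
    _ = ∫ ω, ((f ω - τ ω) ^ 2 - (g ω - τ ω) ^ 2) ∂P := by
        congr 1 with ω
        ring
    _ = (∫ ω, (f ω - τ ω) ^ 2 ∂P) - ∫ ω, (g ω - τ ω) ^ 2 ∂P :=
        integral_sub (hf.sub hτ_mem).integrable_sq (hg.sub hτ_mem).integrable_sq

theorem relative_error_one_step_unbiased_general (hm : m ≤ mΩ) (hW : MemLp W ∞ P)
    (hY : MemLp Y 2 P) (hη : 0 < η) (hηe : ∀ᵐ ω ∂P, η ≤ e ω) (heη : ∀ᵐ ω ∂P, e ω ≤ 1 - η)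
    (he : P[W | m] =ᵐ[P] e) (hμ₁ : P[W * Y | m] =ᵐ[P] e * μ₁)
    (hμ₀ : P[(1 - W) * Y | m] =ᵐ[P] (1 - e) * μ₀)
    (hτ₁ : MemLp τhat₁ 2 P) (hτ₂ : MemLp τhat₂ 2 P)
    (hτ₁_meas : AEStronglyMeasurable[m] τhat₁ P) (hτ₂_meas : AEStronglyMeasurable[m] τhat₂ P) :
    ∫ ω, (τhat₁ ω ^ 2 - τhat₂ ω ^ 2
        - 2 * (τhat₁ ω - τhat₂ ω) * aipwPseudoOutcome W Y e μ₀ μ₁ ω) ∂P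
      = (∫ ω, (τhat₁ ω - (μ₁ ω - μ₀ ω)) ^ 2 ∂P) - ∫ ω, (τhat₂ ω - (μ₁ ω - μ₀ ω)) ^ 2 ∂P := by
  have heη' : ∀ᵐ ω ∂P, η ≤ 1 - e ω := heη.mono fun ω hω ↦ le_sub_comm.1 hω
  exact integral_one_step_of_condExp_ae_eq hm
    (memLp_aipwPseudoOutcome hm one_le_two hW hY hη hηe heη' he hμ₁ hμ₀)
    hτ₁ hτ₂ hτ₁_meas hτ₂_meas
    (condExp_aipwPseudoOutcome hm hW (hY.integrable one_le_two) hη hηe heη' he hμ₁ hμ₀)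

end OneStep

lemma memLp_comp_of_bounded {Ω 𝒳 : Type*} [MeasurableSpace Ω] [MeasurableSpace 𝒳] {P : Measure Ω}
    [IsFiniteMeasure P] {X : Ω → 𝒳} {f : 𝒳 → ℝ} {C : ℝ} {q : ℝ≥0∞} (hX : Measurable X)
    (hf : Measurable f) (hC : ∀ x, |f x| ≤ C) : MemLp (f ∘ X) q P :=
  .of_bound (hf.comp hX).aestronglyMeasurable C (.of_forall fun ω ↦ hC (X ω))

/-- With the true nuisance functions, the one-step integrand for the relative error is
unbiased: `E[τ̂₁(X)² − τ̂₂(X)² − 2(τ̂₁(X) − τ̂₂(X))·Γ] = δ(τ̂₁, τ̂₂) = φ(τ̂₁) − φ(τ̂₂)`. -/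
theorem relative_error_one_step_unbiased
    {Ω 𝒳 : Type*} [MeasurableSpace Ω] [m𝒳 : MeasurableSpace 𝒳]
    (P : Measure Ω) [IsProbabilityMeasure P]
    (X : Ω → 𝒳) (W Y : Ω → ℝ)
    (hX : Measurable X) (hW : Measurable W) (hY : Measurable Y)
    (hW01 : ∀ᵐ ω ∂P, W ω = 0 ∨ W ω = 1)
    (M : ℝ) (hM : 0 < M) (hYb : ∀ᵐ ω ∂P, |Y ω| ≤ M)
    (e μ₀ μ₁ : 𝒳 → ℝ)
    (he : Measurable e) (hμ₀ : Measurable μ₀) (hμ₁ : Measurable μ₁)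
    (C₀ C₁ : ℝ) (hμ₀b : ∀ x, |μ₀ x| ≤ C₀) (hμ₁b : ∀ x, |μ₁ x| ≤ C₁)
    (η : ℝ) (hη₀ : 0 < η) (hη₁ : η < 1/2)
    (heb : ∀ x, η ≤ e x ∧ e x ≤ 1 - η)
    (hce : P[W | m𝒳.comap X] =ᵐ[P] fun ω => e (X ω))
    (hc1 : P[fun ω => W ω * Y ω | m𝒳.comap X] =ᵐ[P] fun ω => e (X ω) * μ₁ (X ω))
    (hc0 : P[fun ω => (1 - W ω) * Y ω | m𝒳.comap X]
        =ᵐ[P] fun ω => (1 - e (X ω)) * μ₀ (X ω)) :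
    ∀ (τhat₁ τhat₂ : 𝒳 → ℝ) (B₁ B₂ : ℝ), Measurable τhat₁ → Measurable τhat₂ →
      (∀ x, |τhat₁ x| ≤ B₁) → (∀ x, |τhat₂ x| ≤ B₂) →
      ∫ ω, (τhat₁ (X ω) ^ 2 - τhat₂ (X ω) ^ 2
          - 2 * (τhat₁ (X ω) - τhat₂ (X ω))
            * (W ω * (Y ω - μ₁ (X ω)) / e (X ω) + μ₁ (X ω)
              - (1 - W ω) * (Y ω - μ₀ (X ω)) / (1 - e (X ω)) - μ₀ (X ω))) ∂P
        = (∫ ω, (τhat₁ (X ω) - (μ₁ (X ω) - μ₀ (X ω))) ^ 2 ∂P)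
          - ∫ ω, (τhat₂ (X ω) - (μ₁ (X ω) - μ₀ (X ω))) ^ 2 ∂P := by
  intro τhat₁ τhat₂ B₁ B₂ hτ₁ hτ₂ hB₁ hB₂
  have hW_le : ∀ᵐ ω ∂P, ‖W ω‖ ≤ 1 := hW01.mono fun ω hω ↦ by rcases hω with h | h <;> simp [h]
  exact relative_error_one_step_unbiased_general hX.comap_le
    (.of_bound hW.aestronglyMeasurable 1 hW_le) (.of_bound hY.aestronglyMeasurable M hYb)
    hη₀ (.of_forall fun ω ↦ (heb (X ω)).1) (.of_forall fun ω ↦ (heb (X ω)).2) hce hc1 hc0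
    (memLp_comp_of_bounded hX hτ₁ hB₁) (memLp_comp_of_bounded hX hτ₂ hB₂)
    (hτ₁.comp (comap_measurable X)).aestronglyMeasurable
    (hτ₂.comp (comap_measurable X)).aestronglyMeasurable
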